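/- Let k ≥ 2, n ≥ 1, κ̄ = ⌈k/2⌉, and 𝓛 = I_n ⊗ L_A^{(k)} + Σ_{i=1}^{n−1} z_i z_iᵀ with z_i = e_{ik} − e_{ik+κ̄}. Let 𝓛' be the (nk+1)×(nk+1) Laplacian obtained by appending one new vertex adjacent only to vertex κ̄, i.e., 𝓛' has block form [[1, −e_{κ̄}ᵀ], [−e_{κ̄}, 𝓛 + e_{κ̄}e_{κ̄}ᵀ]]. Then the pair (𝓛', e_1) is controllable, where e_1 corresponds to the appended vertex. -/

import Mathlib

/-!
The matrix is symmetric, so by the eigenvector test (`isControllable_of_eigenvector`) it suffices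
that an eigenvector `x` vanishing at the appended vertex is zero. The row of the appended vertex
shows that `x` also vanishes at the middle vertex `κ̄` of the first copy, and what remains is the
eigenvalue equation of the chain of copies.

The copies are treated one after another (`chain_zero`). If `x` vanishes at the middle vertex of a
copy and the flow into it is zero, then on that copy `(L - lam) y = -β e_k`, where `β` is the flow
to the next copy, and the claim is `y = 0`, `β = 0` (`arLap_step`). The antiregular graph is built
from its middle outwards by adding isolated and dominating vertices, which gives explicit
eigenvectors with distinct integer eigenvalues (`arLap_arEig`): `1` on the vertices added before a
given vertex, minus their number at that vertex, `0` on the later ones. They are nonzero at `κ̄`, and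
all but the last two vanish at the vertex `k`.

* If `lam` is none of the eigenvalues whose eigenvectors vanish at `k`, then `y` is orthogonal to
  those eigenvectors; starting from `y_κ̄ = 0`, it vanishes on all vertices except `1` and `k`, and
  two rows of the equation finish.
* If `lam` is such an eigenvalue, with eigenvector `v`, pairing `v` with the equation on the next
  copy leaves `β * v_κ̄ = 0`, so `β = 0`. Then `y` is an eigenvector of a single antiregular graph
  with `y_κ̄ = 0`, hence zero (`arLap_observable`).
-/

/-- Laplacian matrix of the `k`-vertex antiregular graph (0-indexed vertices;
1-indexed vertices `i+1`, `j+1` adjacent iff `(i+1)+(j+1) ≤ k+1`). -/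
def antiregLap (k : ℕ) : Matrix (Fin k) (Fin k) ℝ :=
  Matrix.of fun i j =>
    if i = j then
      ((Finset.univ.filter fun m : Fin k => m ≠ i ∧ i.val + m.val + 2 ≤ k + 1).card : ℝ)
    else if i.val + j.val + 2 ≤ k + 1 then -1 else 0

/-- The vector `z_i = e_{ik} - e_{ik+κ̄}` (1-indexed, `κ̄ = ⌈k/2⌉`, `i = p+1`),
on the product index set: copy `p`, vertex `k` minus copy `p+1`, vertex `κ̄`. -/
def zvec (n k : ℕ) (hk : 2 ≤ k) (p : Fin (n - 1)) : Fin n × Fin k → ℝ :=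
  fun q =>
    (if q = (⟨p.val, by have := p.isLt; omega⟩, ⟨k - 1, by omega⟩) then (1 : ℝ) else 0) -
    (if q = (⟨p.val + 1, by have := p.isLt; omega⟩, ⟨(k + 1) / 2 - 1, by omega⟩) then 1 else 0)

/-- `L̄ = I_n ⊗ L_A^{(k)}`, the Laplacian of `n` disjoint copies of the
`k`-vertex antiregular graph, indexed by (copy, vertex). -/
def copiesLap (n k : ℕ) : Matrix (Fin n × Fin k) (Fin n × Fin k) ℝ :=
  Matrix.kroneckerMap (· * ·) (1 : Matrix (Fin n) (Fin n) ℝ) (antiregLap k)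

/-- `𝓛 = I_n ⊗ L_A^{(k)} + Σ_{i=1}^{n-1} z_i z_iᵀ`, the Laplacian of `n`
interconnected copies of the `k`-vertex antiregular graph. -/
def interLap (n k : ℕ) (hk : 2 ≤ k) : Matrix (Fin n × Fin k) (Fin n × Fin k) ℝ :=
  copiesLap n k + ∑ p : Fin (n - 1), Matrix.vecMulVec (zvec n k hk p) (zvec n k hk p)

/-- `(M, b)` is controllable: `b, Mb, M²b, …` span the whole space. -/
def IsControllable {ι : Type} [Fintype ι] [DecidableEq ι]
    (M : Matrix ι ι ℝ) (b : ι → ℝ) : Prop :=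
  Submodule.span ℝ (Set.range fun j : Fin (Fintype.card ι) => (M ^ (j : ℕ)).mulVec b) = ⊤

/-- The vertex `κ̄ = ⌈k/2⌉` of the first copy (0-indexed product coordinates). -/
def firstKappa (k n : ℕ) (hk : 2 ≤ k) (hn : 1 ≤ n) : Fin n × Fin k :=
  (⟨0, hn⟩, ⟨(k + 1) / 2 - 1, by omega⟩)

/-- `𝓛'`: the Laplacian of the graph obtained from the interconnection of `n`
copies of the `k`-vertex antiregular graph by appending one new vertex (listed
first, index `Sum.inl ()`) adjacent only to the vertex `κ̄` of the first copy;
in block form `[[1, -e_κ̄ᵀ], [-e_κ̄, 𝓛 + e_κ̄ e_κ̄ᵀ]]`. -/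
def extInterLap (k n : ℕ) (hk : 2 ≤ k) (hn : 1 ≤ n) :
    Matrix (Unit ⊕ Fin n × Fin k) (Unit ⊕ Fin n × Fin k) ℝ :=
  fun p q =>
    match p, q with
    | Sum.inl _, Sum.inl _ => 1
    | Sum.inl _, Sum.inr j => if j = firstKappa k n hk hn then -1 else 0
    | Sum.inr i, Sum.inl _ => if i = firstKappa k n hk hn then -1 else 0
    | Sum.inr i, Sum.inr j =>
        interLap n k hk i j +
          if i = firstKappa k n hk hn ∧ j = firstKappa k n hk hn then 1 else 0

open Finset

/-! ### The antiregular Laplacian and its eigenvectors -/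

/-- The antiregular Laplacian acting on a vector `y`, given as a function on `ℕ` of which only the
values at the (0-indexed) vertices `q < k` matter. Vertex `i` sees exactly the vertices
`q < k - i`; counting a possible loop at `i` in both the degree and the neighbour sum makes the
formula the same for all `i`. -/
noncomputable def arLap (k : ℕ) (y : ℕ → ℝ) (i : ℕ) : ℝ :=
  ((k : ℝ) - i) * y i - ∑ q ∈ range (k - i), y q

/-- The eigenvector of the antiregular Laplacian attached to the vertex `r`, with eigenvalue `k - r`.
The antiregular graph arises by adding vertices one at a time, alternately isolated and dominating;
the vector is `1` on the vertices added before `r`, minus their number at `r`, and `0` on the later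
ones. Vertices with `k ≤ 2 * r` are added as isolated vertices, the others as dominating ones. For
the first vertex `r = k / 2` the vector is zero. -/
noncomputable def arEig (k r q : ℕ) : ℝ :=
  if k ≤ 2 * r then
    (if q = r then (k : ℝ) - 2 * r else if k ≤ q + r ∧ q < r then 1 else 0)
  else
    (if q = r then 2 * (r : ℝ) + 1 - k else if r < q ∧ q + r < k then 1 else 0)

theorem arLap_symm (k : ℕ) (v y : ℕ → ℝ) :
    ∑ i ∈ range k, v i * arLap k y i = ∑ i ∈ range k, arLap k v i * y i := by
  have key : ∀ w : ℕ → ℝ, ∀ i ∈ range k,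
      ∑ q ∈ range (k - i), w q = ∑ q ∈ range k, if i + q < k then w q else 0 := by
    intro w i hi
    rw [← sum_filter]
    refine sum_congr ?_ fun _ _ => rfl
    ext q
    simp only [mem_range, mem_filter]
    omega
  have e1 : ∑ i ∈ range k, v i * ∑ q ∈ range (k - i), y q
      = ∑ i ∈ range k, (∑ q ∈ range (k - i), v q) * y i := by
    have e2 : ∀ i ∈ range k, v i * ∑ q ∈ range (k - i), y q
        = ∑ q ∈ range k, if i + q < k then v i * y q else 0 := by
      intro i hi
      rw [key y i hi, mul_sum]
      exact sum_congr rfl fun q _ => by split_ifs <;> simp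
    have e3 : ∀ i ∈ range k, (∑ q ∈ range (k - i), v q) * y i
        = ∑ q ∈ range k, if q + i < k then v q * y i else 0 := by
      intro i hi
      rw [key v i hi, sum_mul]
      exact sum_congr rfl fun q _ => by rw [add_comm i q]; split_ifs <;> simp
    rw [sum_congr rfl e2, sum_congr rfl e3, sum_comm]
  have e4 : ∀ i, v i * arLap k y i
      = ((k : ℝ) - i) * v i * y i - v i * ∑ q ∈ range (k - i), y q :=
    fun i => by rw [arLap]; ring
  have e5 : ∀ i, arLap k v i * y i
      = ((k : ℝ) - i) * v i * y i - (∑ q ∈ range (k - i), v q) * y i :=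
    fun i => by rw [arLap]; ring
  simp only [e4, e5, sum_sub_distrib, e1]

theorem arEig_prefix_iso {k r : ℕ} (hr : r < k) (h : k ≤ 2 * r) (m : ℕ) :
    ∑ q ∈ range m, arEig k r q =
      if m ≤ k - r then 0 else if m ≤ r then (m : ℝ) - (k - r) else 0 := by
  induction m with
  | zero => simp
  | succ m ih =>
    rw [sum_range_succ, ih, arEig, if_pos h]
    rcases lt_trichotomy m r with h1 | h1 | h1
    · rcases lt_trichotomy m (k - r) with h2 | h2 | h2
      · rw [if_pos (by omega), if_neg (by omega), if_neg (by omega), if_pos (by omega)]; simp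
      · rw [if_pos (by omega), if_neg (by omega), if_pos (by omega), if_neg (by omega),
          if_pos (by omega), h2]
        push_cast [Nat.cast_sub hr.le]; ring
      · rw [if_neg (by omega), if_pos (by omega), if_neg (by omega), if_pos (by omega),
          if_neg (by omega), if_pos (by omega)]
        push_cast; ring
    · subst h1
      rw [if_pos rfl]
      by_cases h2 : m ≤ k - m
      · have : k = 2 * m := by omega
        rw [if_pos h2, if_neg (by omega), if_neg (by omega), this]; push_cast; ring
      · rw [if_neg h2, if_pos le_rfl, if_neg (by omega), if_neg (by omega)]; ring
    · rw [if_neg (by omega), if_neg (by omega), if_neg (by omega), if_neg (by omega),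
        if_neg (by omega), if_neg (by omega)]; simp

theorem arEig_prefix_dom {k r : ℕ} (h : 2 * r < k) (m : ℕ) :
    ∑ q ∈ range m, arEig k r q =
      if m ≤ r then 0 else if m ≤ k - r then (m : ℝ) - (k - r) else 0 := by
  induction m with
  | zero => simp
  | succ m ih =>
    rw [sum_range_succ, ih, arEig, if_neg (by omega : ¬ k ≤ 2 * r)]
    rcases lt_trichotomy m r with h1 | h1 | h1
    · rw [if_pos (by omega), if_neg (by omega), if_neg (by omega), if_pos (by omega)]; simp
    · subst h1
      rw [if_pos (by omega), if_pos rfl, if_neg (by omega), if_pos (by omega)]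
      push_cast; ring
    · rw [if_neg (by omega), if_neg (by omega : ¬ m = r), if_neg (by omega : ¬ m + 1 ≤ r)]
      rcases lt_trichotomy m (k - r) with h2 | h2 | h2
      · rw [if_pos (by omega), if_pos (by omega), if_pos (by omega)]
        push_cast; ring
      · rw [if_pos (by omega), if_neg (by omega), if_neg (by omega), h2]
        push_cast [Nat.cast_sub (by omega : r ≤ k)]; ring
      · rw [if_neg (by omega), if_neg (by omega), if_neg (by omega)]; simp

theorem arLap_arEig {k r q : ℕ} (hr : r < k) (hq : q < k) :
    arLap k (arEig k r) q = ((k : ℝ) - r) * arEig k r q := by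
  have hc : ((k - q : ℕ) : ℝ) = (k : ℝ) - q := Nat.cast_sub hq.le
  by_cases h : k ≤ 2 * r
  · rw [arLap, arEig_prefix_iso hr h, arEig, if_pos h, hc]
    rcases lt_trichotomy q r with h1 | h1 | h1
    · rw [if_neg (by omega : ¬ q = r), if_neg (by omega : ¬ k - q ≤ k - r)]
      by_cases h2 : k ≤ q + r
      · rw [if_pos ⟨h2, h1⟩, if_pos (by omega)]; ring
      · rw [if_neg (by omega), if_neg (by omega)]; ring
    · rw [if_pos h1, if_pos (by omega), h1]; ring
    · rw [if_neg (by omega), if_neg (by omega), if_pos (by omega)]; ring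
  · rw [arLap, arEig_prefix_dom (by omega), arEig, if_neg h, hc]
    rcases lt_trichotomy q r with h1 | h1 | h1
    · rw [if_neg (by omega), if_neg (by omega), if_neg (by omega), if_neg (by omega)]; ring
    · rw [if_pos h1, if_neg (by omega), if_pos (by omega), h1]; ring
    · rw [if_neg (by omega : ¬ q = r)]
      by_cases h2 : q + r < k
      · rw [if_pos ⟨h1, h2⟩, if_neg (by omega), if_pos (by omega)]; ring
      · rw [if_neg (by omega), if_pos (by omega)]; ring

/-- Pairing a perturbed eigenvalue equation with an eigenvector removes the Laplacian. -/
theorem arEig_pair {k r : ℕ} (hr : r < k) {y f : ℕ → ℝ} {lam : ℝ}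
    (h : ∀ i < k, arLap k y i + f i = lam * y i) :
    ((k : ℝ) - r - lam) * ∑ q ∈ range k, arEig k r q * y q
      + ∑ q ∈ range k, arEig k r q * f q = 0 := by
  have h1 : ∑ i ∈ range k, arEig k r i * (arLap k y i + f i)
      = ∑ i ∈ range k, arEig k r i * (lam * y i) :=
    sum_congr rfl fun i hi => by rw [h i (mem_range.1 hi)]
  have h2 : ∑ i ∈ range k, arLap k (arEig k r) i * y i
      = ∑ i ∈ range k, ((k : ℝ) - r) * (arEig k r i * y i) :=
    sum_congr rfl fun i hi => by rw [arLap_arEig hr (mem_range.1 hi), mul_assoc]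
  have h3 : ∑ i ∈ range k, arEig k r i * (lam * y i)
      = lam * ∑ i ∈ range k, arEig k r i * y i := by
    rw [mul_sum]; exact sum_congr rfl fun i _ => by ring
  simp only [mul_add, sum_add_distrib] at h1
  rw [arLap_symm, h2, ← mul_sum, h3] at h1
  linarith

theorem arLap_sum (k : ℕ) (y : ℕ → ℝ) : ∑ i ∈ range k, arLap k y i = 0 := by
  have := arLap_symm k (fun _ => 1) y
  simp only [one_mul] at this
  rw [this]
  refine sum_eq_zero fun i hi => ?_
  have := mem_range.1 hi
  simp [arLap, Nat.cast_sub this.le]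

/-! ### Construction order -/

/-- The vertex added at time `j < k` (so after `j` others) in the construction of the antiregular
graph by isolated and dominating vertices. -/
def arVtx (k j : ℕ) : ℕ := if (k + j) % 2 = 0 then (k + j) / 2 else (k - 1 - j) / 2

/-- The sum of `y` over the first `j` vertices in construction order. -/
noncomputable def arWin (k : ℕ) (y : ℕ → ℝ) (j : ℕ) : ℝ := ∑ l ∈ range j, y (arVtx k l)

/-- The first `j` vertices in construction order form an interval around the middle. -/
theorem arWin_eq {k j : ℕ} (hj : j ≤ k) (y : ℕ → ℝ) :
    arWin k y j = ∑ q ∈ Ico ((k + 1 - j) / 2) ((k + 1 + j) / 2), y q := by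
  induction j with
  | zero => simp [arWin]
  | succ j ih =>
    rw [arWin, sum_range_succ, ← arWin, ih (by omega), arVtx]
    split_ifs with h
    · rw [show (k + 1 + (j + 1)) / 2 = (k + j) / 2 + 1 by omega,
        show (k + 1 - (j + 1)) / 2 = (k + 1 - j) / 2 by omega,
        show (k + 1 + j) / 2 = (k + j) / 2 by omega, sum_Ico_succ_top (by omega)]
    · rw [show (k + 1 + (j + 1)) / 2 = (k + 1 + j) / 2 by omega,
        show (k + 1 - (j + 1)) / 2 = (k - 1 - j) / 2 by omega,
        show (k + 1 - j) / 2 = (k - 1 - j) / 2 + 1 by omega,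
        sum_eq_sum_Ico_succ_bot (by omega : (k - 1 - j) / 2 < (k + 1 + j) / 2), add_comm]

theorem arVtx_lt {k j : ℕ} (hj : j < k) : arVtx k j < k := by
  unfold arVtx; split_ifs <;> omega

theorem arVtx_inj {k i j : ℕ} (hi : i < k) (hj : j < k) (h : arVtx k i = arVtx k j) : i = j := by
  unfold arVtx at h; split_ifs at h <;> omega

/-- Every vertex is added at some time, made explicit. -/
theorem arVtx_surj {k q : ℕ} (hq : q < k) :
    arVtx k (if k ≤ 2 * q then 2 * q - k else k - 1 - 2 * q) = q := by
  unfold arVtx; split_ifs <;> omega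

theorem arEig_dot {k j : ℕ} (hj : j < k) (y : ℕ → ℝ) :
    ∑ q ∈ range k, arEig k (arVtx k j) q * y q = arWin k y j - j * y (arVtx k j) := by
  have hsub : Ico ((k + 1 - j) / 2) ((k + 1 + j) / 2) ⊆ range k := by
    intro q; simp only [mem_Ico, mem_range]; omega
  have hval : ∀ q ∈ range k, arEig k (arVtx k j) q * y q =
      (if q ∈ Ico ((k + 1 - j) / 2) ((k + 1 + j) / 2) then y q else 0)
        - (if q = arVtx k j then j * y q else 0) := by
    intro q hq
    have hq := mem_range.1 hq
    have hc : (arVtx k j : ℝ) = if (k + j) % 2 = 0 then ((k : ℝ) + j) / 2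
        else ((k : ℝ) - 1 - j) / 2 := by
      unfold arVtx
      split_ifs with h
      · rw [Nat.cast_div (by omega) (by norm_num)]; push_cast; ring
      · rw [Nat.cast_div (by omega) (by norm_num), Nat.cast_sub (by omega), Nat.cast_sub (by omega)]
        push_cast; ring
    by_cases h : (k + j) % 2 = 0
    · have hv : arVtx k j = (k + j) / 2 := if_pos h
      rw [if_pos h] at hc
      rw [arEig, if_pos (by omega)]
      by_cases h1 : q = arVtx k j
      · rw [if_pos h1, if_pos h1, if_neg (by rw [mem_Ico]; omega), hc]; ring
      · rw [if_neg h1, if_neg h1]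
        by_cases h2 : q ∈ Ico ((k + 1 - j) / 2) ((k + 1 + j) / 2)
        · rw [if_pos h2, if_pos (by rw [mem_Ico] at h2; omega)]; ring
        · rw [if_neg h2, if_neg (by rw [mem_Ico] at h2; omega)]; ring
    · have hv : arVtx k j = (k - 1 - j) / 2 := if_neg h
      rw [if_neg h] at hc
      rw [arEig, if_neg (by omega)]
      by_cases h1 : q = arVtx k j
      · rw [if_pos h1, if_pos h1, if_neg (by rw [mem_Ico]; omega), hc]; ring
      · rw [if_neg h1, if_neg h1]
        by_cases h2 : q ∈ Ico ((k + 1 - j) / 2) ((k + 1 + j) / 2)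
        · rw [if_pos h2, if_pos (by rw [mem_Ico] at h2; omega)]; ring
        · rw [if_neg h2, if_neg (by rw [mem_Ico] at h2; omega)]; ring
  rw [sum_congr rfl hval, sum_sub_distrib, sum_ite_mem, inter_eq_right.2 hsub,
    sum_ite_eq' (range k), if_pos (mem_range.2 (arVtx_lt hj)), arWin_eq hj.le]

/-- Only the last two vertices in construction order have eigenvectors that reach the vertex at
which a copy is joined to the next one. -/
theorem arEig_end {k j : ℕ} (hj : j + 3 ≤ k) : arEig k (arVtx k j) (k - 1) = 0 := by
  unfold arEig arVtx
  split_ifs <;> first | rfl | omega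

theorem arEig_mid {k j : ℕ} (hj : j < k) (hj1 : 1 ≤ j) :
    arEig k (arVtx k j) ((k + 1) / 2 - 1) ≠ 0 := by
  unfold arEig
  have hv := arVtx_lt hj
  split_ifs with h1 h2 h3 h2 h3
  · unfold arVtx at *; split_ifs at * <;> omega
  · norm_num
  · unfold arVtx at *; split_ifs at * <;> omega
  · have : 2 * arVtx k j + 1 ≠ k := by unfold arVtx at *; split_ifs at * <;> omega
    intro h0
    exact this (by exact_mod_cast (sub_eq_zero.1 h0))
  · norm_num
  · unfold arVtx at *; split_ifs at * <;> omega

/-- Outward propagation: if `y` vanishes at the middle vertex and is orthogonal to the eigenvectors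
of times `1, …, J - 1`, then it vanishes on the first `J` vertices. For even `k` the middle vertex
is added at time `1` rather than `0`, so the eigenvector of time `1` is needed to start. -/
theorem arWin_forward {k J : ℕ} (hk : 2 ≤ k) {y : ℕ → ℝ} (hJ : J = 1 → k % 2 = 1)
    (h0 : y ((k + 1) / 2 - 1) = 0)
    (h : ∀ j, 1 ≤ j → j < J → arWin k y j = j * y (arVtx k j)) :
    ∀ j < J, y (arVtx k j) = 0 := by
  have c0 : 0 < J → y (arVtx k 0) = 0 := by
    intro hJ0
    by_cases hp : k % 2 = 1
    · rw [← h0]; congr 1; unfold arVtx; split_ifs <;> omega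
    · have h1 := h 1 le_rfl (by omega)
      have h2 : arVtx k 1 = (k + 1) / 2 - 1 := by unfold arVtx; split_ifs <;> omega
      rw [h2, h0] at h1
      simpa [arWin] using h1
  intro j
  induction j using Nat.strong_induction_on with
  | _ j ih =>
    intro hj
    rcases Nat.eq_zero_or_pos j with rfl | hpos
    · exact c0 hj
    · have h1 := h j hpos hj
      have h2 : arWin k y j = 0 :=
        sum_eq_zero fun l hl => ih l (mem_range.1 hl) ((mem_range.1 hl).trans hj)
      rw [h2] at h1
      have : (j : ℝ) ≠ 0 := by exact_mod_cast hpos.ne'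
      rcases mul_eq_zero.1 h1.symm with h3 | h3
      · exact absurd h3 this
      · exact h3

/-! ### Observability of one copy and of the chain -/

/-- A single antiregular graph is observable from its middle vertex. If `lam` is the eigenvalue of
time `j0`, then `y` is orthogonal to all other eigenvectors, including the constants; vanishing
propagates outward from the middle up to time `j0` and inward from the total sum down to time
`j0 + 1`, so orthogonality to the eigenvector of time `j0` comes for free. -/
theorem arLap_observable {k : ℕ} (hk : 2 ≤ k) {y : ℕ → ℝ} {lam : ℝ}
    (h : ∀ i < k, arLap k y i = lam * y i) (h0 : y ((k + 1) / 2 - 1) = 0) :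
    ∀ i < k, y i = 0 := by
  have pair : ∀ j < k, ((k : ℝ) - arVtx k j - lam) *
      (arWin k y j - j * y (arVtx k j)) = 0 := by
    intro j hj
    have := arEig_pair (f := fun _ => 0) (arVtx_lt hj) (fun i hi => by rw [add_zero, h i hi])
    simpa [arEig_dot hj] using this
  suffices hall : ∀ j, 1 ≤ j → j < k → arWin k y j = j * y (arVtx k j) by
    have := arWin_forward hk (by omega) h0 hall
    intro i hi
    have h1 := this (if k ≤ 2 * i then 2 * i - k else k - 1 - 2 * i) (by split_ifs <;> omega)
    rwa [arVtx_surj hi] at h1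
  intro j0 hj0 hj0k
  rcases mul_eq_zero.1 (pair j0 hj0k) with hlam | hz
  swap
  · linarith
  -- The eigenvalues are distinct, so `lam` is none of the others.
  have other : ∀ j < k, j ≠ j0 → arWin k y j = j * y (arVtx k j) := by
    intro j hj hne
    rcases mul_eq_zero.1 (pair j hj) with h1 | h1
    · have : (arVtx k j : ℝ) = arVtx k j0 := by linarith
      exact absurd (arVtx_inj hj hj0k (by exact_mod_cast this)) hne
    · linarith
  have hlam0 : lam ≠ 0 := by
    have : (arVtx k j0 : ℝ) < k := by exact_mod_cast arVtx_lt hj0k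
    intro hl; linarith
  have htot : arWin k y k = 0 := by
    have h1 : ∑ i ∈ range k, lam * y i = 0 := by
      rw [← arLap_sum k y]; exact sum_congr rfl fun i hi => (h i (mem_range.1 hi)).symm
    rw [← mul_sum] at h1
    rw [arWin_eq le_rfl, show (k + 1 - k) / 2 = 0 by omega, show (k + 1 + k) / 2 = k by omega,
      ← range_eq_Ico]
    exact (mul_eq_zero.1 h1).resolve_left hlam0
  have hsucc : ∀ j, arWin k y (j + 1) = arWin k y j + y (arVtx k j) :=
    fun j => sum_range_succ _ _
  have back : ∀ d, d + (j0 + 1) ≤ k → arWin k y (k - d) = 0 := by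
    intro d
    induction d with
    | zero => intro _; exact htot
    | succ d ih =>
      intro hd
      have h1 := ih (by omega)
      have h2 := other (k - (d + 1)) (by omega) (by omega)
      have h3 := hsucc (k - (d + 1))
      rw [show k - (d + 1) + 1 = k - d by omega, h1] at h3
      have h4 : ((k - (d + 1) : ℕ) + 1 : ℝ) * y (arVtx k (k - (d + 1))) = 0 := by
        rw [h2] at h3; linarith
      have h5 := (mul_eq_zero.1 h4).resolve_left (by positivity)
      rw [h2, h5, mul_zero]
  have hb := back (k - (j0 + 1)) (by omega)
  rw [show k - (k - (j0 + 1)) = j0 + 1 by omega, hsucc] at hb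
  have key : arWin k y j0 = 0 ∨ y (arVtx k j0) = 0 := by
    by_cases h1 : j0 = 1 ∧ k % 2 = 0
    · right; rw [← h0]; congr 1; unfold arVtx; split_ifs <;> omega
    · left
      refine sum_eq_zero fun l hl => ?_
      exact arWin_forward (J := j0) hk (by omega) h0
        (fun j _ hj => other j (by omega) (by omega)) l (mem_range.1 hl)
  rcases key with h1 | h1
  · have : y (arVtx k j0) = 0 := by linarith
    rw [h1, this, mul_zero]
  · have : arWin k y j0 = 0 := by linarith
    rw [h1, this, mul_zero]

/-- One copy in the chain, with `β` the flow into the next copy `w` (and `γ` the flow out of `w`).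
If `lam` is an eigenvalue whose eigenvector vanishes at the last vertex, pairing that eigenvector
with the equation of `w` kills `β`; otherwise `y` vanishes on all but the two extreme vertices, and
the equations at the middle vertex and at vertex `0` do the rest. -/
theorem arLap_step {k : ℕ} (hk : 2 ≤ k) {y : ℕ → ℝ} {lam β : ℝ}
    (h : ∀ i < k, arLap k y i + (if i = k - 1 then β else 0) = lam * y i)
    (h0 : y ((k + 1) / 2 - 1) = 0)
    (hβ : β = 0 ∨ ∃ (w : ℕ → ℝ) (γ : ℝ), ∀ i < k, arLap k w i +
      ((if i = k - 1 then γ else 0) - (if i = (k + 1) / 2 - 1 then β else 0)) = lam * w i) :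
    (∀ i < k, y i = 0) ∧ β = 0 := by
  suffices hy : ∀ i < k, y i = 0 by
    refine ⟨hy, ?_⟩
    have h1 := h (k - 1) (by omega)
    rw [if_pos rfl, hy (k - 1) (by omega), mul_zero, arLap, hy (k - 1) (by omega),
      sum_eq_zero fun q hq => hy q (by have := mem_range.1 hq; omega)] at h1
    linarith
  by_cases hb0 : β = 0
  · exact arLap_observable hk (fun i hi => by simpa [hb0] using h i hi) h0
  obtain ⟨w, γ, hw⟩ := hβ.resolve_left hb0
  have hwin : ∀ j, 1 ≤ j → j < k - 2 → arWin k y j = j * y (arVtx k j) := by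
    intro j hj1 hj
    have hjk : j < k := by omega
    have hk1 : k - 1 ∈ range k := mem_range.2 (by omega)
    have hk2 : (k + 1) / 2 - 1 ∈ range k := mem_range.2 (by omega)
    have p1 := arEig_pair (arVtx_lt hjk) h
    have p2 := arEig_pair (arVtx_lt hjk) hw
    simp only [mul_sub, mul_ite, mul_zero, sum_sub_distrib, sum_ite_eq', if_pos hk1, if_pos hk2,
      arEig_end (by omega : j + 3 ≤ k), zero_mul, add_zero, zero_sub] at p1 p2
    rw [arEig_dot hjk] at p1
    rcases mul_eq_zero.1 p1 with h1 | h1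
    · rw [h1, zero_mul, zero_add, neg_eq_zero] at p2
      rcases mul_eq_zero.1 p2 with h2 | h2
      · exact absurd h2 (arEig_mid hjk hj1)
      · exact absurd h2 hb0
    · linarith
  have hz := arWin_forward hk (by omega) h0 hwin
  have hin : ∀ q, 1 ≤ q → q < k - 1 → y q = 0 := by
    intro q hq1 hq
    have h1 := hz (if k ≤ 2 * q then 2 * q - k else k - 1 - 2 * q) (by split_ifs <;> omega)
    rwa [arVtx_surj (by omega)] at h1
  have hy0 : y 0 = 0 := by
    by_cases hk2 : k = 2
    · subst hk2; exact h0
    · have h1 := h ((k + 1) / 2 - 1) (by omega)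
      rw [if_neg (by omega), arLap, h0, mul_zero, mul_zero,
        show k - ((k + 1) / 2 - 1) = (k - (k + 1) / 2) + 1 by omega, sum_range_succ',
        sum_eq_zero fun q hq => hin (q + 1) (by omega) (by have := mem_range.1 hq; omega)] at h1
      linarith
  have hlast : y (k - 1) = 0 := by
    have h1 := h 0 (by omega)
    rw [if_neg (by omega), arLap, hy0, Nat.sub_zero,
      show range k = range ((k - 1) + 1) by congr 1; omega, sum_range_succ,
      sum_eq_zero fun q hq => ?_] at h1
    · linarith
    · rcases Nat.eq_zero_or_pos q with rfl | hq0
      · exact hy0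
      · exact hin q hq0 (mem_range.1 hq)
  intro i hi
  rcases Nat.eq_zero_or_pos i with rfl | hi0
  · exact hy0
  · rcases Nat.lt_or_ge i (k - 1) with h1 | h1
    · exact hin i hi0 h1
    · rwa [show i = k - 1 by omega]

/-- A vector on the chain of copies satisfying the eigenvalue equation and vanishing at the middle
vertex of the first copy is zero; `g p` is the flow from copy `p` to copy `p + 1`. -/
theorem chain_zero {k n : ℕ} (hk : 2 ≤ k) {X : ℕ → ℕ → ℝ} {g : ℕ → ℝ} {lam : ℝ}
    (hg : ∀ p, p + 1 < n → g p = X p (k - 1) - X (p + 1) ((k + 1) / 2 - 1))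
    (hgn : ∀ p, p + 1 = n → g p = 0)
    (h : ∀ p < n, ∀ i < k, arLap k (X p) i + ((if i = k - 1 then g p else 0)
      - (if i = (k + 1) / 2 - 1 then (if p = 0 then 0 else g (p - 1)) else 0)) = lam * X p i)
    (h0 : X 0 ((k + 1) / 2 - 1) = 0) :
    ∀ p < n, (∀ i < k, X p i = 0) ∧ g p = 0 := by
  have step : ∀ p < n, X p ((k + 1) / 2 - 1) = 0 → (if p = 0 then 0 else g (p - 1)) = 0 →
      (∀ i < k, X p i = 0) ∧ g p = 0 := by
    intro p hp hX hgp
    refine arLap_step (lam := lam) hk (fun i hi => ?_) hX ?_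
    · simpa [hgp] using h p hp i hi
    · rcases Nat.lt_or_ge (p + 1) n with h1 | h1
      · exact Or.inr ⟨X (p + 1), g (p + 1), fun i hi => by simpa using h (p + 1) h1 i hi⟩
      · exact Or.inl (hgn p (by omega))
  intro p
  induction p with
  | zero => intro hp; exact step 0 hp h0 (if_pos rfl)
  | succ p ih =>
    intro hp
    obtain ⟨h1, h2⟩ := ih (by omega)
    refine step (p + 1) hp ?_ (by simpa using h2)
    have := hg p hp
    rw [h2, h1 (k - 1) (by omega)] at this
    linarith

/-! ### The eigenvector test -/

open Matrix in
/-- The eigenvector (Hautus) test for a symmetric matrix: if no nonzero eigenvector is orthogonal to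
`b`, then `(M, b)` is controllable. -/
theorem isControllable_of_eigenvector {ι : Type} [Fintype ι] [DecidableEq ι]
    {M : Matrix ι ι ℝ} {b : ι → ℝ} (hM : Mᵀ = M)
    (h : ∀ (lam : ℝ) (x : ι → ℝ), M *ᵥ x = lam • x → x ⬝ᵥ b = 0 → x = 0) :
    IsControllable M b := by
  classical
  set S := Submodule.span ℝ
    (Set.range fun j : Fin (Fintype.card ι) => (M ^ (j : ℕ)).mulVec b) with hS
  have hpow : ∀ j : ℕ, (M ^ j) *ᵥ b ∈ S := by
    intro j
    rw [Matrix.pow_eq_aeval_mod_charpoly M j, Polynomial.aeval_eq_sum_range, Matrix.sum_mulVec]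
    refine Submodule.sum_mem _ fun i hi => ?_
    rw [Matrix.smul_mulVec]
    by_cases hi' : i < Fintype.card ι
    · exact Submodule.smul_mem _ _ (Submodule.subset_span ⟨⟨i, hi'⟩, rfl⟩)
    · rw [Polynomial.coeff_eq_zero_of_degree_lt, zero_smul]
      · exact Submodule.zero_mem _
      · refine (Polynomial.degree_modByMonic_lt _ M.charpoly_monic).trans_le ?_
        rw [Matrix.charpoly_degree_eq_dim]
        exact_mod_cast not_lt.1 hi'
  let T := Matrix.toEuclideanLin M
  have hT : T.IsSymmetric := by
    refine Matrix.isSymmetric_toEuclideanLin_iff.2 ?_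
    rw [Matrix.IsHermitian, Matrix.conjTranspose_eq_transpose_of_trivial, hM]
  -- the vectors orthogonal to every `M ^ j b`
  let V : Submodule ℝ (EuclideanSpace ℝ ι) :=
    { carrier := {x | ∀ j : ℕ, x.ofLp ⬝ᵥ (M ^ j) *ᵥ b = 0}
      add_mem' := fun {x y} hx hy j => by
        simp only [Set.mem_ofPred_eq] at hx hy
        rw [WithLp.ofLp_add, add_dotProduct, hx, hy, add_zero]
      zero_mem' := fun j => by simp
      smul_mem' := fun c x hx j => by
        simp only [Set.mem_ofPred_eq] at hx
        rw [WithLp.ofLp_smul, smul_dotProduct, hx, smul_zero] }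
  have hTV : ∀ x ∈ V, T x ∈ V := by
    intro x hx j
    have h1 : (T x).ofLp = M *ᵥ x.ofLp := rfl
    rw [h1, ← Matrix.vecMul_transpose, hM, ← Matrix.dotProduct_mulVec, Matrix.mulVec_mulVec,
      ← pow_succ']
    exact hx (j + 1)
  have hsub : Subsingleton V := by
    refine (hT.restrict_invariant hTV).subsingleton_of_no_eigenvalue_finiteDimensional fun μ => ?_
    rw [Submodule.eq_bot_iff]
    intro x hx
    have h1 := Module.End.mem_eigenspace_iff.1 hx
    have h2 : M *ᵥ x.1.ofLp = μ • x.1.ofLp :=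
      congrArg (fun z : V => z.1.ofLp) h1
    have h3 := h μ x.1.ofLp h2 (by simpa using x.2 0)
    ext i
    simpa using congrFun h3 i
  by_contra hne
  obtain ⟨w, hw⟩ : ∃ w, w ∉ S := by
    by_contra hall
    push Not at hall
    exact hne ((Submodule.eq_top_iff').2 hall)
  obtain ⟨f, hf, hfS⟩ := Submodule.exists_dual_map_eq_bot_of_notMem hw inferInstance
  have hfd : ∀ z : ι → ℝ, (fun i => f (Pi.single i 1)) ⬝ᵥ z = f z := by
    intro z
    conv_rhs => rw [pi_eq_sum_univ' z, map_sum]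
    refine Finset.sum_congr rfl fun i _ => ?_
    simp only [map_smul, smul_eq_mul]
    rw [mul_comm]
  have hmem : WithLp.toLp 2 (fun i => f (Pi.single i 1)) ∈ V := by
    intro j
    change (fun i => f (Pi.single i 1)) ⬝ᵥ _ = 0
    rw [hfd]
    have : f ((M ^ j) *ᵥ b) ∈ S.map f := Submodule.mem_map_of_mem (hpow j)
    rwa [hfS, Submodule.mem_bot] at this
  have h0 := congrArg (fun z : V => z.1.ofLp) (Subsingleton.elim (⟨_, hmem⟩ : V) 0)
  apply hf
  rw [← hfd w]
  have h0' : (fun i => f (Pi.single i 1)) = 0 := h0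
  rw [h0', zero_dotProduct]

/-! ### The matrices of the statement -/

theorem antiregLap_apply {k : ℕ} (i j : Fin k) :
    antiregLap k i j = (if i = j then (k : ℝ) - i else 0)
      - (if i.val + j.val < k then 1 else 0) := by
  rw [antiregLap, Matrix.of_apply]
  by_cases hij : i = j
  · subst hij
    rw [if_pos rfl, if_pos rfl]
    have hset : (univ.filter fun m : Fin k => m ≠ i ∧ i.val + m.val + 2 ≤ k + 1)
        = (univ.filter fun m : Fin k => m.val < k - i.val).erase i := by
      ext m
      simp only [mem_filter, mem_univ, true_and, mem_erase]
      have := i.isLt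
      refine and_congr_right fun _ => ?_
      omega
    have hcard : (univ.filter fun m : Fin k => m.val < k - i.val).card = k - i.val := by
      rw [Fin.card_filter_val_lt]; omega
    have hi := i.isLt
    rw [hset, card_erase_eq_ite, hcard]
    by_cases h2 : i.val + i.val < k
    · rw [if_pos h2, if_pos (by simp only [mem_filter, mem_univ, true_and]; omega),
        Nat.cast_sub (by omega), Nat.cast_sub hi.le, Nat.cast_one]
    · rw [if_neg h2, if_neg (by simp only [mem_filter, mem_univ, true_and]; omega),
        Nat.cast_sub hi.le, sub_zero]
  · rw [if_neg hij, if_neg hij]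
    by_cases h2 : i.val + j.val < k
    · rw [if_pos h2, if_pos (by omega)]; ring
    · rw [if_neg h2, if_neg (by omega)]; ring

theorem antiregLap_symm {k : ℕ} (i j : Fin k) : antiregLap k i j = antiregLap k j i := by
  rw [antiregLap_apply, antiregLap_apply, add_comm i.val]
  by_cases h : i = j
  · rw [h]
  · rw [if_neg h, if_neg (Ne.symm h)]

theorem antiregLap_row {k : ℕ} (i : Fin k) (Y : ℕ → ℝ) :
    ∑ j : Fin k, antiregLap k i j * Y j = arLap k Y i := by
  simp only [antiregLap_apply, sub_mul, ite_mul, zero_mul, one_mul, sum_sub_distrib,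
    sum_ite_eq, mem_univ, if_true, arLap]
  rw [Fin.sum_univ_eq_sum_range (fun q => if i.val + q < k then Y q else 0), ← sum_filter]
  congr 1
  refine sum_congr ?_ fun _ _ => rfl
  ext q
  simp only [mem_range, mem_filter]
  omega

theorem zvec_dot {n k : ℕ} (hk : 2 ≤ k) (r : Fin (n - 1)) (X : ℕ → ℕ → ℝ) :
    ∑ q : Fin n × Fin k, zvec n k hk r q * X q.1 q.2
      = X r (k - 1) - X (r + 1) ((k + 1) / 2 - 1) := by
  simp [zvec, sub_mul, sum_sub_distrib]

/-- The action of the interconnected Laplacian on copy `p`: the antiregular Laplacian of the copy,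
plus the flow `g p` out of its last vertex, minus the flow `g (p - 1)` into its middle vertex. -/
theorem interLap_row {n k : ℕ} (hk : 2 ≤ k) (X : ℕ → ℕ → ℝ) (g : ℕ → ℝ)
    (hg : ∀ p, p + 1 < n → g p = X p (k - 1) - X (p + 1) ((k + 1) / 2 - 1))
    (hgn : ∀ p, p + 1 = n → g p = 0) (p : Fin n) (i : Fin k) :
    ∑ q : Fin n × Fin k, interLap n k hk (p, i) q * X q.1 q.2 =
      arLap k (X p) i + ((if i.val = k - 1 then g p else 0)
        - (if i.val = (k + 1) / 2 - 1 then (if p.val = 0 then 0 else g (p - 1)) else 0)) := by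
  have h1 : ∑ q : Fin n × Fin k, copiesLap n k (p, i) q * X q.1 q.2 = arLap k (X p) i := by
    rw [Fintype.sum_prod_type, ← antiregLap_row i (X p)]
    simp only [copiesLap, Matrix.kroneckerMap_apply, Matrix.one_apply, ite_mul, one_mul, zero_mul]
    rw [sum_comm]
    simp
  have h2 : ∑ q : Fin n × Fin k, (∑ r : Fin (n - 1),
      Matrix.vecMulVec (zvec n k hk r) (zvec n k hk r)) (p, i) q * X q.1 q.2
      = ∑ r : Fin (n - 1), zvec n k hk r (p, i) * g r := by
    simp only [Matrix.sum_apply, Matrix.vecMulVec_apply, sum_mul]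
    rw [sum_comm]
    refine sum_congr rfl fun r _ => ?_
    have hr := r.isLt
    rw [hg r (by omega), ← zvec_dot hk r X, mul_sum]
    exact sum_congr rfl fun q _ => by ring
  have h3 : ∑ r : Fin (n - 1), zvec n k hk r (p, i) * g r =
      (if i.val = k - 1 then g p else 0)
        - (if i.val = (k + 1) / 2 - 1 then (if p.val = 0 then 0 else g (p - 1)) else 0) := by
    have hp := p.isLt
    let F : ℕ → ℝ := fun r =>
      (if p.val = r then (if i.val = k - 1 then g p else 0) else 0)
        - (if p.val = r + 1 then (if i.val = (k + 1) / 2 - 1 then g (p - 1) else 0) else 0)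
    have e : ∀ r : Fin (n - 1), zvec n k hk r (p, i) * g r =
        F r := by
      intro r
      simp only [F, zvec, Prod.mk.injEq, Fin.ext_iff, sub_mul, ite_mul, one_mul, zero_mul, ite_and]
      congr 1
      · split_ifs with a b
        · rw [a]
        · rfl
        · rfl
      · split_ifs with a b
        · rw [a, Nat.add_sub_cancel]
        · rfl
        · rfl
    rw [sum_congr rfl fun r _ => e r, Fin.sum_univ_eq_sum_range F, sum_sub_distrib]
    congr 1
    · rw [sum_ite_eq]
      by_cases hl : p.val + 1 = n
      · rw [if_neg (by rw [mem_range]; omega), hgn p hl, ite_self]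
      · rw [if_pos (by rw [mem_range]; omega)]
    · by_cases h0 : p.val = 0
      · rw [if_pos h0, ite_self]
        exact sum_eq_zero fun r _ => if_neg (by omega)
      · rw [if_neg h0, sum_eq_single (p.val - 1), if_pos (by omega)]
        · intro r _ hr; exact if_neg (by omega)
        · intro hr; exact absurd (mem_range.2 (by omega)) hr
  simp only [interLap, Matrix.add_apply, add_mul, sum_add_distrib]
  rw [h1, h2, h3]

theorem interLap_symm {n k : ℕ} (hk : 2 ≤ k) (p q : Fin n × Fin k) :
    interLap n k hk p q = interLap n k hk q p := by
  simp only [interLap, Matrix.add_apply, Matrix.sum_apply, Matrix.vecMulVec_apply, copiesLap,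
    Matrix.kroneckerMap_apply, antiregLap_symm p.2 q.2]
  congr 1
  · by_cases h : p.1 = q.1
    · rw [h]
    · rw [Matrix.one_apply_ne h, Matrix.one_apply_ne (Ne.symm h)]
  · exact sum_congr rfl fun r _ => mul_comm _ _

theorem extInterLap_transpose (k n : ℕ) (hk : 2 ≤ k) (hn : 1 ≤ n) :
    (extInterLap k n hk hn).transpose = extInterLap k n hk hn := by
  ext p q
  rw [Matrix.transpose_apply]
  rcases p with p | p <;> rcases q with q | q <;> simp only [extInterLap]
  rw [interLap_symm hk q p]
  simp only [and_comm]

/-- appending one vertex adjacent to the vertex `κ̄` of the first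
copy yields a graph that is Laplacian controllable by an input connected to the
appended vertex. -/
theorem extInterLap_controllable (k n : ℕ) (hk : 2 ≤ k) (hn : 1 ≤ n) :
    IsControllable (extInterLap k n hk hn)
      (fun p => if p = Sum.inl () then (1 : ℝ) else 0) := by
  refine isControllable_of_eigenvector (extInterLap_transpose k n hk hn) fun lam x hx hxb => ?_
  have hx0 : x (Sum.inl ()) = 0 := by simpa [dotProduct] using hxb
  have hfk : x (Sum.inr (firstKappa k n hk hn)) = 0 := by
    have h1 := congrFun hx (Sum.inl ())
    simpa [Matrix.mulVec, dotProduct, extInterLap, hx0] using h1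
  let X : ℕ → ℕ → ℝ := fun p i =>
    if h : p < n ∧ i < k then x (Sum.inr (⟨p, h.1⟩, ⟨i, h.2⟩)) else 0
  have hX : ∀ q : Fin n × Fin k, X q.1 q.2 = x (Sum.inr q) := fun q =>
    dif_pos ⟨q.1.isLt, q.2.isLt⟩
  let g : ℕ → ℝ := fun p =>
    if p + 1 < n then X p (k - 1) - X (p + 1) ((k + 1) / 2 - 1) else 0
  have hg : ∀ p, p + 1 < n → g p = X p (k - 1) - X (p + 1) ((k + 1) / 2 - 1) :=
    fun p hp => if_pos hp
  have hgn : ∀ p, p + 1 = n → g p = 0 := fun p hp => if_neg (by omega)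
  have hrow : ∀ q : Fin n × Fin k,
      ∑ j, interLap n k hk q j * X j.1 j.2 = lam * X q.1 q.2 := by
    intro q
    have h1 := congrFun hx (Sum.inr q)
    simp only [Matrix.mulVec, dotProduct, Fintype.sum_sum_type, extInterLap, add_mul,
      sum_add_distrib, ite_and, ite_mul, zero_mul, one_mul, Pi.smul_apply, smul_eq_mul] at h1
    have h2 : (∑ j : Fin n × Fin k, if q = firstKappa k n hk hn then
        (if j = firstKappa k n hk hn then x (Sum.inr j) else 0) else 0) = 0 := by
      refine sum_eq_zero fun j _ => ?_
      split_ifs with a b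
      · rw [b, hfk]
      · rfl
      · rfl
    rw [h2] at h1
    simp only [hX]
    simpa [hx0] using h1
  have hz := chain_zero (lam := lam) hk hg hgn (fun p hp i hi => by
    have h1 := hrow (⟨p, hp⟩, ⟨i, hi⟩)
    rwa [interLap_row hk X g hg hgn] at h1) (by
    have h1 := hX (firstKappa k n hk hn)
    rw [hfk] at h1
    exact h1)
  funext q
  rcases q with q | q
  · exact hx0
  · rw [← hX q]
    exact (hz q.1 q.1.isLt).1 q.2 q.2.isLt
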